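/- arXiv:1208.0357 — 2 statements merged into one kernel-verified Lean document; each statement's English description precedes it below -/
import Mathlib

section
/- Every slope on a two-bridge knot is regular. Precisely: let ρ : G(α,β) → SL(2,ℂ) be an irreducible representation of the two-bridge knot group with tr ρ(μ) = 2 or tr ρ(μ) = −2. Then for every pair of coprime integers p, q, the element ρ(μ^p λ^q) is not the identity matrix. -/
/-!
Let `x`, `y` be the images of the generators. They are conjugate, of trace `2ε` with `ε = ±1`, and
by irreducibility have no common eigenvector, so after a conjugation `x = ε·(1 1; 0 1)` and
`y = ε·(1 0; z 1)` (`exists_normal_form`). The word `w` has an even number of letters and odd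
exponents, so `ε` drops out of it, and its entries are integral polynomials in `z`
(`pairWord_entries`). The relation `xw = wy` says that the lower right entry, the Riley
polynomial, vanishes at `z`; its leading coefficient is `±1`, so `z`, and with it every entry of
`w`, is an algebraic integer. Write `w = (a b; c 0)`, with `bc = -1`.

The signs `ε_i` form a palindrome (`eps_symm`), so `w*` is `w` read backwards. As `Q = diag(i, -i)`
inverts both generators by conjugation, `w* = Q w⁻¹ Q⁻¹ = (0 b; c a)`. Hence
`w w* = -(1 -2ab; 0 1)` and `λ = -(1 2t; 0 1)` with `t = n - ab` an algebraic integer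
(`word_mul_conj`).

Now `μ^p λ^q = ε^p (-1)^q (1 p+2qt; 0 1)`. If `p` is even then `q` is odd and the sign is `-1`. If
`p` is odd then `p + 2qt ≠ 0`, since otherwise `p / 2 = -qt` would be a rational algebraic integer.
-/

open Matrix

noncomputable section

/-- `SL(2,ℂ)`. -/
abbrev SL2C := Matrix.SpecialLinearGroup (Fin 2) ℂ

/-- `ε_i = (−1)^⌊iβ/α⌋`. -/
def eps (α β : ℤ) (i : ℕ) : ℤ :=
  if Even (Int.fdiv ((i : ℤ) * β) α) then 1 else -1

/-- The word `w = y^{ε_1} x^{ε_2} y^{ε_3} ⋯ y^{ε_{α−2}} x^{ε_{α−1}}`. -/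
def wordG {G : Type*} [Group G] (α β : ℤ) (x y : G) : G :=
  ((List.range (α.toNat - 1)).map
    (fun j => (if (j + 1) % 2 = 1 then y else x) ^ eps α β (j + 1))).prod

/-- The reversed word `w* = x^{ε_1} y^{ε_2} ⋯ x^{ε_{α−2}} y^{ε_{α−1}}`. -/
def wordStarG {G : Type*} [Group G] (α β : ℤ) (x y : G) : G :=
  ((List.range (α.toNat - 1)).map
    (fun j => (if (j + 1) % 2 = 1 then x else y) ^ eps α β (j + 1))).prod

/-- `n = −Σ_{i=1}^{α−1} ε_i`. -/
def nval (α β : ℤ) : ℤ := -∑ i ∈ Finset.Icc 1 (α.toNat - 1), eps α β i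

/-- The single relation `x w (w y)⁻¹` of the two-bridge knot group. -/
def twoBridgeRel (α β : ℤ) : Set (FreeGroup Bool) :=
  { FreeGroup.of true * wordG α β (FreeGroup.of true) (FreeGroup.of false) *
      (wordG α β (FreeGroup.of true) (FreeGroup.of false) * FreeGroup.of false)⁻¹ }

/-- The two-bridge knot group `G(α,β) = ⟨x, y ∣ xw = wy⟩`. -/
abbrev KnotGroup (α β : ℤ) := PresentedGroup (twoBridgeRel α β)

/-- The generator `x`. -/
def xgen (α β : ℤ) : KnotGroup α β := PresentedGroup.of true

/-- The generator `y`. -/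
def ygen (α β : ℤ) : KnotGroup α β := PresentedGroup.of false

/-- The meridian `μ = x`. -/
def meridian (α β : ℤ) : KnotGroup α β := xgen α β

/-- The longitude `λ = x^{2n} w w*`. -/
def longitude (α β : ℤ) : KnotGroup α β :=
  xgen α β ^ (2 * nval α β) *
    wordG α β (xgen α β) (ygen α β) * wordStarG α β (xgen α β) (ygen α β)

/-- A representation is irreducible if no one-dimensional subspace of `ℂ²` is
invariant under all `ρ(g)`. -/
def IsIrreducibleRep {G : Type*} [Group G] (ρ : G →* SL2C) : Prop :=
  ¬ ∃ v : Fin 2 → ℂ, v ≠ 0 ∧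
      ∀ g : G, ∃ c : ℂ, (ρ g : Matrix (Fin 2) (Fin 2) ℂ) *ᵥ v = c • v

/-! ### Palindromic symmetry of the word -/

/-- The sign sequence is a palindrome: `⌊(α - i)β/α⌋ = β - 1 - ⌊iβ/α⌋` because `α ∤ iβ`, and
`β - 1` is even. -/
lemma eps_symm {α β : ℤ} (hβ : Odd β) (hcop : IsCoprime α β) {i j : ℕ} (hi : 0 < i) (hj : 0 < j)
    (hij : (i : ℤ) + j = α) : eps α β j = eps α β i := by
  have hα : 0 < α := by omega
  have hnd : ¬ α ∣ (i : ℤ) * β := fun h => by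
    have := Int.le_of_dvd (by omega) (hcop.dvd_of_dvd_mul_right h)
    omega
  have key : Int.fdiv ((j : ℤ) * β) α = β - 1 - Int.fdiv ((i : ℤ) * β) α := by
    rw [Int.fdiv_eq_ediv_of_nonneg _ hα.le, Int.fdiv_eq_ediv_of_nonneg _ hα.le]
    have h1 := Int.emod_nonneg ((i : ℤ) * β) hα.ne'
    have h2 := Int.emod_lt_of_pos ((i : ℤ) * β) hα
    have h3 := Int.emod_add_mul_ediv ((i : ℤ) * β) α
    have h4 : (i : ℤ) * β % α ≠ 0 := fun h => hnd (Int.dvd_of_emod_eq_zero h)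
    have hr : 0 < (i : ℤ) * β % α := by omega
    apply Int.ediv_eq_iff_of_pos hα |>.2
    have hj' : (j : ℤ) = α - i := by omega
    constructor <;> rw [hj'] <;> nlinarith
  unfold eps
  rw [key]
  obtain ⟨k, rfl⟩ := hβ
  have : Even (2 * k + 1 - 1 - Int.fdiv ((i : ℤ) * (2 * k + 1)) α) ↔
      Even (Int.fdiv ((i : ℤ) * (2 * k + 1)) α) := by
    simp [Int.even_sub]
  simp only [this]

/-- As `ε` is a palindrome, `w*` is `w` read backwards. Hence an element inverting both generators
by conjugation carries `w⁻¹` to `w*`. -/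
lemma wordStarG_eq_conj {G : Type*} [Group G] {α β : ℤ} (hαodd : Odd α) (hβ : Odd β)
    (hcop : IsCoprime α β) {x y Q : G} (hx : Q * x * Q⁻¹ = x⁻¹) (hy : Q * y * Q⁻¹ = y⁻¹) :
    wordStarG α β x y = Q * (wordG α β x y)⁻¹ * Q⁻¹ := by
  obtain ⟨m, hm⟩ := hαodd
  rw [← MulAut.conj_apply, wordG, List.prod_inv_reverse, map_list_prod, wordStarG]
  congr 1
  apply List.ext_getElem
  · simp
  · intro j h1 h2
    simp only [List.length_map, List.length_range] at h1
    simp only [List.getElem_map, List.getElem_range, List.getElem_reverse, List.length_map,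
      List.length_range, map_inv, map_zpow]
    have he : eps α β (α.toNat - 1 - 1 - j + 1) = eps α β (j + 1) :=
      eps_symm hβ hcop (by omega) (by omega) (by push_cast; omega)
    rw [he]
    have hx' : MulAut.conj Q x = x⁻¹ := by simpa using hx
    have hy' : MulAut.conj Q y = y⁻¹ := by simpa using hy
    by_cases hj : (j + 1) % 2 = 1
    · rw [if_pos hj, if_neg (by omega), hx', _root_.inv_zpow, inv_inv]
    · rw [if_neg hj, if_pos (by omega), hy', _root_.inv_zpow, inv_inv]

lemma map_wordG {G H : Type*} [Group G] [Group H] (f : G →* H) (α β : ℤ) (x y : G) :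
    f (wordG α β x y) = wordG α β (f x) (f y) := by
  simp only [wordG, map_list_prod, List.map_map]
  congr 1
  refine List.map_congr_left fun j _ => ?_
  simp only [Function.comp_apply, map_zpow]
  split_ifs <;> rfl

lemma map_wordStarG {G H : Type*} [Group G] [Group H] (f : G →* H) (α β : ℤ) (x y : G) :
    f (wordStarG α β x y) = wordStarG α β (f x) (f y) := by
  simp only [wordStarG, map_list_prod, List.map_map]
  congr 1
  refine List.map_congr_left fun j _ => ?_
  simp only [Function.comp_apply, map_zpow]
  split_ifs <;> rfl

/-! ### The word as a product of syllable pairs -/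

/-- The product of the first `k` syllable pairs `y^{ε_{2i+1}} x^{ε_{2i+2}}`, `0 ≤ i < k`, of `w`. -/
def pairWord {G : Type*} [Group G] (α β : ℤ) (x y : G) : ℕ → G
  | 0 => 1
  | k + 1 => pairWord α β x y k * (y ^ eps α β (2 * k + 1) * x ^ eps α β (2 * k + 2))

lemma wordG_eq_pairWord {G : Type*} [Group G] {α β : ℤ} {m : ℕ} (hm : α = 2 * m + 1) (x y : G) :
    wordG α β x y = pairWord α β x y m := by
  have h : α.toNat - 1 = 2 * m := by omega
  rw [wordG, h]
  clear h hm
  induction m with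
  | zero => simp [pairWord]
  | succ k ih =>
    rw [show 2 * (k + 1) = 2 * k + 1 + 1 by ring, List.range_succ, List.range_succ]
    simp only [List.map_append, List.prod_append, List.map_cons, List.map_nil, List.prod_singleton]
    rw [ih, pairWord, if_pos (by omega), if_neg (by omega), mul_assoc]

lemma eps_eq (α β : ℤ) (i : ℕ) : eps α β i = 1 ∨ eps α β i = -1 := by
  unfold eps; split_ifs <;> simp

/-! ### Unipotent matrices and the Riley polynomial -/

lemma SL2C.ext_coe {A B : SL2C}
    (h : (A : Matrix (Fin 2) (Fin 2) ℂ) = (B : Matrix (Fin 2) (Fin 2) ℂ)) : A = B :=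
  Subtype.ext h

/-- The upper unipotent matrix with corner entry `s`. -/
def upp (s : ℂ) : SL2C := ⟨!![1, s; 0, 1], by simp⟩

/-- The lower unipotent matrix with corner entry `z`. -/
def low (z : ℂ) : SL2C := ⟨!![1, 0; z, 1], by simp⟩

lemma coe_upp (s : ℂ) : (upp s : Matrix (Fin 2) (Fin 2) ℂ) = !![1, s; 0, 1] := rfl

lemma coe_low (z : ℂ) : (low z : Matrix (Fin 2) (Fin 2) ℂ) = !![1, 0; z, 1] := rfl

lemma upp_mul (s t : ℂ) : upp s * upp t = upp (s + t) := by
  apply SL2C.ext_coe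
  rw [Matrix.SpecialLinearGroup.coe_mul]
  simp [coe_upp, add_comm]

lemma low_mul (s t : ℂ) : low s * low t = low (s + t) := by
  apply SL2C.ext_coe
  rw [Matrix.SpecialLinearGroup.coe_mul]
  simp [coe_low]

lemma upp_zero : upp 0 = 1 := by
  apply SL2C.ext_coe
  simp [coe_upp, Matrix.one_fin_two]

lemma low_zero : low 0 = 1 := by
  apply SL2C.ext_coe
  simp [coe_low, Matrix.one_fin_two]

/-- `s ↦ upp s` as a one-parameter subgroup. -/
def uppHom : Multiplicative ℂ →* SL2C where
  toFun s := upp s.toAdd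
  map_one' := upp_zero
  map_mul' _ _ := (upp_mul _ _).symm

lemma upp_zpow (s : ℂ) (k : ℤ) : upp s ^ k = upp (k * s) := by
  have := map_zpow uppHom (Multiplicative.ofAdd s) k
  simpa [uppHom] using this.symm

lemma upp_inv (s : ℂ) : (upp s)⁻¹ = upp (-s) := by
  simpa using upp_zpow s (-1)

lemma low_inv (s : ℂ) : (low s)⁻¹ = low (-s) := by
  rw [inv_eq_iff_mul_eq_one, low_mul, add_neg_cancel, low_zero]

lemma upp_zpow_eps (α β : ℤ) (i : ℕ) : upp 1 ^ eps α β i = upp (eps α β i) := by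
  rw [upp_zpow, mul_one]

lemma low_zpow_eps (z : ℂ) (α β : ℤ) (i : ℕ) : low z ^ eps α β i = low (eps α β i * z) := by
  rcases eps_eq α β i with h | h <;> rw [h] <;> simp [low_inv]

/-- `w` has an even number of letters, all with odd exponent, so it does not see a sign change of
both generators. -/
lemma pairWord_neg (α β : ℤ) (x y : SL2C) (k : ℕ) :
    pairWord α β (-x) (-y) k = pairWord α β x y k := by
  have hneg : ∀ (g : SL2C) (i : ℕ), (-g) ^ eps α β i = -(g ^ eps α β i) := by
    intro g i
    rcases eps_eq α β i with h | h <;> rw [h] <;> simp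
  induction k with
  | zero => rfl
  | succ k ih => rw [pairWord, pairWord, ih, hneg, hneg, neg_mul_neg]

open Polynomial in
/-- The entries of `w(upp 1, low z)` are integral polynomials in `z`; the lower right one
(the Riley polynomial) has leading coefficient `±1` in degree `k`. -/
lemma pairWord_entries (α β : ℤ) (z : ℂ) (k : ℕ) :
    ∃ a b c d : ℤ[X],
      ((pairWord α β (upp 1) (low z) k : SL2C) : Matrix (Fin 2) (Fin 2) ℂ) =
        !![aeval z a, aeval z b; aeval z c, aeval z d] ∧
      c.natDegree ≤ k ∧ d.natDegree ≤ k ∧ (d.coeff k = 1 ∨ d.coeff k = -1) := by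
  induction k with
  | zero => exact ⟨1, 0, 0, 1, by simp [pairWord, Matrix.one_fin_two], by simp, by simp, by simp⟩
  | succ k ih =>
    obtain ⟨a, b, c, d, hM, hc, hd, hlead⟩ := ih
    obtain ⟨e, he, he'⟩ : ∃ e, e = eps α β (2 * k + 1) ∧ (e = 1 ∨ e = -1) :=
      ⟨_, rfl, eps_eq _ _ _⟩
    obtain ⟨f, hf, hf'⟩ : ∃ f, f = eps α β (2 * k + 2) ∧ (f = 1 ∨ f = -1) :=
      ⟨_, rfl, eps_eq _ _ _⟩
    refine ⟨a + b * (C e * X), a * C f + b * (1 + C (e * f) * X), c + C e * (d * X),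
      C f * c + d + C (e * f) * (d * X), ?_, ?_, ?_, ?_⟩
    · rw [pairWord, Matrix.SpecialLinearGroup.coe_mul, Matrix.SpecialLinearGroup.coe_mul,
        upp_zpow_eps, low_zpow_eps, hM, coe_upp, coe_low, ← he, ← hf]
      ext i j
      fin_cases i <;> fin_cases j <;> simp [Matrix.mul_apply, Fin.sum_univ_two, -mul_eq_mul_left_iff]
      all_goals ring
    · compute_degree!; omega
    · compute_degree!; omega
    · have h1 : c.coeff (k + 1) = 0 := coeff_eq_zero_of_natDegree_lt (by omega)
      have h2 : d.coeff (k + 1) = 0 := coeff_eq_zero_of_natDegree_lt (by omega)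
      simp only [coeff_add, coeff_C_mul, coeff_mul_X, h1, h2]
      rcases he' with rfl | rfl <;> rcases hf' with rfl | rfl <;> rcases hlead with h | h <;>
        simp [h]

open Polynomial in
lemma isIntegral_of_root {z : ℂ} {d : ℤ[X]} {k : ℕ} (hd : d.natDegree ≤ k)
    (hl : d.coeff k = 1 ∨ d.coeff k = -1) (h0 : aeval z d = 0) : IsIntegral ℤ z := by
  rcases hl with hl | hl
  · exact ⟨d, monic_of_natDegree_le_of_coeff_eq_one k hd hl, h0⟩
  · refine ⟨-d, monic_of_natDegree_le_of_coeff_eq_one k (by simpa) (by simp [hl]), ?_⟩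
    rw [← aeval_def, map_neg, h0, neg_zero]

open Polynomial in
lemma isIntegral_aeval {z : ℂ} (hz : IsIntegral ℤ z) (a : ℤ[X]) : IsIntegral ℤ (aeval z a) := by
  have h := (aeval (⟨z, hz⟩ : integralClosure ℤ ℂ) a).2
  have h' := aeval_algebraMap_apply ℂ (⟨z, hz⟩ : integralClosure ℤ ℂ) a
  exact h' ▸ h

/-- The matrix `diag(i, -i)`; conjugation by it inverts every `upp s` and every `low z`. -/
def flipMat : SL2C := ⟨!![Complex.I, 0; 0, -Complex.I], by simp⟩

lemma coe_flipMat :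
    (flipMat : Matrix (Fin 2) (Fin 2) ℂ) = !![Complex.I, 0; 0, -Complex.I] := rfl

lemma flip_upp (s : ℂ) : flipMat * upp s * flipMat⁻¹ = (upp s)⁻¹ := by
  rw [mul_inv_eq_iff_eq_mul, upp_inv]
  apply SL2C.ext_coe
  rw [Matrix.SpecialLinearGroup.coe_mul, Matrix.SpecialLinearGroup.coe_mul, coe_upp, coe_upp,
    coe_flipMat]
  simp [mul_comm]

lemma flip_low (s : ℂ) : flipMat * low s * flipMat⁻¹ = (low s)⁻¹ := by
  rw [mul_inv_eq_iff_eq_mul, low_inv]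
  apply SL2C.ext_coe
  rw [Matrix.SpecialLinearGroup.coe_mul, Matrix.SpecialLinearGroup.coe_mul, coe_low, coe_low,
    coe_flipMat]
  simp [mul_comm]

/-- In normal form `w w* = -upp (2t)` with `t` an algebraic integer. The relation `xw = wy` forces
the lower right entry of `w` to vanish, i.e. `z` is a root of the Riley polynomial and hence
integral; then `t = -ab`, where `(a, b)` is the first row of `w`. -/
lemma word_mul_conj {α β : ℤ} {m : ℕ} {z : ℂ}
    (hrel : upp 1 * pairWord α β (upp 1) (low z) m = pairWord α β (upp 1) (low z) m * low z) :
    ∃ t : ℂ, IsIntegral ℤ t ∧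
      pairWord α β (upp 1) (low z) m * (flipMat * (pairWord α β (upp 1) (low z) m)⁻¹ * flipMat⁻¹) =
        -upp (2 * t) := by
  obtain ⟨a, b, c, d, hM, hc, hd, hlead⟩ := pairWord_entries α β z m
  set w := pairWord α β (upp 1) (low z) m with hw
  have hdet := w.det_coe
  have hrel' := congrArg (Subtype.val) hrel
  rw [Matrix.SpecialLinearGroup.coe_mul, Matrix.SpecialLinearGroup.coe_mul] at hrel'
  change (upp 1 : Matrix (Fin 2) (Fin 2) ℂ) * (w : Matrix (Fin 2) (Fin 2) ℂ) =
    (w : Matrix (Fin 2) (Fin 2) ℂ) * (low z : Matrix (Fin 2) (Fin 2) ℂ) at hrel'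
  rw [hM, coe_upp, coe_low] at hrel'
  rw [hM, Matrix.det_fin_two_of] at hdet
  have h00 := congrFun (congrFun hrel' 0) 0
  have h01 := congrFun (congrFun hrel' 0) 1
  simp [Matrix.mul_apply, Fin.sum_univ_two] at h00 h01
  have hz := isIntegral_of_root hd hlead h01
  refine ⟨-(Polynomial.aeval z a * Polynomial.aeval z b),
    ((isIntegral_aeval hz a).mul (isIntegral_aeval hz b)).neg, ?_⟩
  rw [← mul_assoc, mul_inv_eq_iff_eq_mul]
  apply SL2C.ext_coe
  simp only [Matrix.SpecialLinearGroup.coe_mul, Matrix.SpecialLinearGroup.coe_neg,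
    Matrix.SpecialLinearGroup.coe_inv, hM, coe_upp, coe_flipMat, Matrix.adjugate_fin_two_of]
  rw [h01] at hdet ⊢
  ext i j
  fin_cases i <;> fin_cases j <;> simp [Matrix.mul_apply, Fin.sum_univ_two]
  · linear_combination -Complex.I * hdet
  · ring
  · linear_combination Complex.I * hdet

/-! ### Slopes in normal form -/

lemma neg_zpow_even (g : SL2C) {k : ℤ} (hk : Even k) : (-g) ^ k = g ^ k := by
  obtain ⟨j, rfl⟩ := hk
  rw [← two_mul, _root_.zpow_mul, _root_.zpow_mul]
  congr 1
  exact neg_sq g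

lemma neg_zpow_odd (g : SL2C) {k : ℤ} (hk : Odd k) : (-g) ^ k = -(g ^ k) := by
  obtain ⟨j, rfl⟩ := hk
  rw [_root_.zpow_add_one, _root_.zpow_add_one, neg_zpow_even g (even_two_mul j), mul_neg]

lemma neg_upp_ne_one {s : ℂ} : -upp s ≠ 1 := by
  intro h
  have := congrFun (congrFun (congrArg Subtype.val h) 0) 0
  change -(1 : ℂ) = 1 at this
  norm_num at this

lemma upp_eq_one {s : ℂ} (h : upp s = 1) : s = 0 := by
  have := congrFun (congrFun (congrArg Subtype.val h) 0) 1
  change s = (1 : Matrix (Fin 2) (Fin 2) ℂ) 0 1 at this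
  simpa using this

/-- If `p + 2qt = 0` with `t` an algebraic integer, then `p / 2 = -qt` is a rational algebraic
integer, so `p` is even. -/
lemma slope_ne_zero {p : ℤ} (q : ℤ) (hp : Odd p) {t : ℂ} (ht : IsIntegral ℤ t) :
    (p : ℂ) + q * (2 * t) ≠ 0 := by
  intro h
  have hhalf : (p : ℂ) / 2 = -(q * t) := by linear_combination h / 2
  have hi : IsIntegral ℤ (algebraMap ℚ ℂ ((p : ℚ) / 2)) := by
    have : algebraMap ℚ ℂ ((p : ℚ) / 2) = -(q * t) := by rw [← hhalf]; simp
    rw [this]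
    exact ((isIntegral_algebraMap (x := q)).mul ht).neg
  have hi' : IsIntegral ℤ ((p : ℚ) / 2) :=
    (isIntegral_algebraMap_iff (algebraMap ℚ ℂ).injective).1 hi
  obtain ⟨r, hr⟩ := IsIntegrallyClosed.isIntegral_iff.1 hi'
  have : (2 * r : ℚ) = p := by
    simp at hr; rw [hr]; ring
  have h3 : 2 * r = p := by exact_mod_cast this
  exact (Int.not_even_iff_odd.2 hp) ⟨r, by omega⟩

/-- The theorem for generators in normal form. Here `λ ↦ -upp (2(n + t))`, so `μ^p λ^q` has sign
`(-1)^q` when `p` is even, and corner entry `p + 2q(n + t) ≠ 0` when `p` is odd. -/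
lemma slope_ne_one_of_normal_form {α β : ℤ} (hα : 1 < α) (hαodd : Odd α) (hβ : Odd β)
    (hcop : IsCoprime α β) {A B : SL2C} {z : ℂ}
    (hAB : (A = upp 1 ∧ B = low z) ∨ (A = -upp 1 ∧ B = -low z))
    (hrel : A * wordG α β A B = wordG α β A B * B) {p q : ℤ} (hpq : IsCoprime p q) :
    A ^ p * (A ^ (2 * nval α β) * wordG α β A B * wordStarG α β A B) ^ q ≠ 1 := by
  obtain ⟨m, hm⟩ : ∃ m : ℕ, α = 2 * m + 1 := by
    obtain ⟨m, hm⟩ := hαodd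
    exact ⟨m.toNat, by omega⟩
  have hw : wordG α β A B = pairWord α β (upp 1) (low z) m := by
    rw [wordG_eq_pairWord hm]
    rcases hAB with ⟨rfl, rfl⟩ | ⟨rfl, rfl⟩
    · rfl
    · exact pairWord_neg _ _ _ _ _
  have hfA : flipMat * A * flipMat⁻¹ = A⁻¹ := by
    rcases hAB with ⟨rfl, rfl⟩ | ⟨rfl, rfl⟩ <;> simp [flip_upp]
  have hfB : flipMat * B * flipMat⁻¹ = B⁻¹ := by
    rcases hAB with ⟨rfl, rfl⟩ | ⟨rfl, rfl⟩ <;> simp [flip_low]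
  have hrel' : upp 1 * pairWord α β (upp 1) (low z) m =
      pairWord α β (upp 1) (low z) m * low z := by
    rw [hw] at hrel
    rcases hAB with ⟨rfl, rfl⟩ | ⟨rfl, rfl⟩
    · exact hrel
    · simpa using hrel
  obtain ⟨t, ht, hwt⟩ := word_mul_conj hrel'
  have hA2 : A ^ (2 * nval α β) = upp (2 * nval α β) := by
    rcases hAB with ⟨rfl, rfl⟩ | ⟨rfl, rfl⟩
    · simp [upp_zpow]
    · rw [neg_zpow_even _ (even_two_mul _)]; simp [upp_zpow]
  have hlong : A ^ (2 * nval α β) * wordG α β A B * wordStarG α β A B =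
      -upp (2 * (nval α β + t)) := by
    rw [wordStarG_eq_conj hαodd hβ hcop hfA hfB, mul_assoc, hw, hwt, hA2, mul_neg, upp_mul]
    ring_nf
  have ht' : IsIntegral ℤ ((nval α β : ℂ) + t) := (isIntegral_algebraMap (x := nval α β)).add ht
  rw [hlong]
  intro h
  rcases Int.even_or_odd p with hp | hp
  · -- `q` is odd and the sign of `A ^ p` is `+`, so the slope acts with trace `-2`.
    have hq : Odd q := by
      rw [← Int.not_even_iff_odd]
      intro hq
      have := hpq.isUnit_of_dvd' hp.two_dvd hq.two_dvd
      exact absurd this (by decide)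
    have hAp : A ^ p = upp p := by
      rcases hAB with ⟨rfl, rfl⟩ | ⟨rfl, rfl⟩
      · simp [upp_zpow]
      · rw [neg_zpow_even _ hp]; simp [upp_zpow]
    rw [hAp, neg_zpow_odd _ hq, upp_zpow, mul_neg, upp_mul] at h
    exact neg_upp_ne_one h
  · have hs := slope_ne_zero q hp ht'
    have key : upp (p + q * (2 * (nval α β + t))) = 1 ∨
        -upp (p + q * (2 * (nval α β + t))) = 1 := by
      have hu : upp 1 ^ p * upp (2 * (nval α β + t)) ^ q =
          upp (p + q * (2 * (nval α β + t))) := by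
        rw [upp_zpow, upp_zpow, upp_mul, mul_one]
      rw [← hu]
      rcases hAB with ⟨rfl, rfl⟩ | ⟨rfl, rfl⟩ <;> rcases Int.even_or_odd q with hq | hq
      · rw [neg_zpow_even _ hq] at h; exact .inl h
      · rw [neg_zpow_odd _ hq, mul_neg] at h; exact .inr h
      · rw [neg_zpow_even _ hq, neg_zpow_odd _ hp, neg_mul] at h; exact .inr h
      · rw [neg_zpow_odd _ hq, neg_zpow_odd _ hp, neg_mul_neg] at h; exact .inl h
    rcases key with h | h
    · exact hs (upp_eq_one h)
    · exact neg_upp_ne_one h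

/-! ### Reduction to the normal form -/

/-- A matrix in `SL(2,ℂ)` with trace `2ε`, `ε = ±1`, has an eigenvector for `ε`. -/
lemma exists_eigenvector {A : SL2C} {ε : ℂ} (hε : ε = 1 ∨ ε = -1)
    (htr : Matrix.trace (A : Matrix (Fin 2) (Fin 2) ℂ) = 2 * ε) :
    ∃ v : Fin 2 → ℂ, v ≠ 0 ∧ (A : Matrix (Fin 2) (Fin 2) ℂ) *ᵥ v = ε • v := by
  have hdet := A.det_coe
  rw [Matrix.det_fin_two] at hdet
  rw [Matrix.trace_fin_two] at htr
  have hε2 : ε * ε = 1 := by rcases hε with rfl | rfl <;> norm_num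
  have h0 : ((A : Matrix (Fin 2) (Fin 2) ℂ) - ε • (1 : Matrix (Fin 2) (Fin 2) ℂ)).det = 0 := by
    rw [Matrix.det_fin_two]
    simp
    linear_combination hdet - ε * htr - hε2
  obtain ⟨v, hv, h⟩ := Matrix.exists_mulVec_eq_zero_iff.2 h0
  refine ⟨v, hv, ?_⟩
  rw [Matrix.sub_mulVec, Matrix.smul_mulVec, Matrix.one_mulVec, sub_eq_zero] at h
  exact h

/-- Two matrices of trace `2ε` without a common eigenvector are simultaneously conjugate to
`ε · upp 1` and `ε · low z`: use their eigenvectors as a basis, suitably rescaled. -/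
lemma exists_normal_form {A B : SL2C} {ε : ℂ} (hε : ε = 1 ∨ ε = -1)
    (hA : Matrix.trace (A : Matrix (Fin 2) (Fin 2) ℂ) = 2 * ε)
    (hB : Matrix.trace (B : Matrix (Fin 2) (Fin 2) ℂ) = 2 * ε)
    (hno : ∀ v : Fin 2 → ℂ, v ≠ 0 → ∀ a b : ℂ, (A : Matrix (Fin 2) (Fin 2) ℂ) *ᵥ v = a • v →
      (B : Matrix (Fin 2) (Fin 2) ℂ) *ᵥ v ≠ b • v) :
    ∃ (P : SL2C) (z : ℂ),
      (A : Matrix (Fin 2) (Fin 2) ℂ) * (P : Matrix (Fin 2) (Fin 2) ℂ) =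
        (P : Matrix (Fin 2) (Fin 2) ℂ) * (ε • !![1, 1; 0, 1]) ∧
      (B : Matrix (Fin 2) (Fin 2) ℂ) * (P : Matrix (Fin 2) (Fin 2) ℂ) =
        (P : Matrix (Fin 2) (Fin 2) ℂ) * (ε • !![1, 0; z, 1]) := by
  obtain ⟨u, hu, hAu⟩ := exists_eigenvector hε hA
  obtain ⟨v, hv, hBv⟩ := exists_eigenvector hε hB
  have hε2 : ε * ε = 1 := by rcases hε with rfl | rfl <;> norm_num
  rw [Matrix.trace_fin_two] at hA hB
  have hBu := hno u hu ε ε hAu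
  have hAv : (A : Matrix (Fin 2) (Fin 2) ℂ) *ᵥ v ≠ ε • v := fun h => hno v hv ε ε h hBv
  have hA0 := congrFun hAu 0
  have hA1 := congrFun hAu 1
  have hB0 := congrFun hBv 0
  have hB1 := congrFun hBv 1
  simp [Matrix.mulVec, dotProduct, Fin.sum_univ_two] at hA0 hA1 hB0 hB1
  generalize (A : Matrix (Fin 2) (Fin 2) ℂ) = MA at *
  generalize (B : Matrix (Fin 2) (Fin 2) ℂ) = MB at *
  obtain ⟨D, hD⟩ : ∃ D, D = u 0 * v 1 - u 1 * v 0 := ⟨_, rfl⟩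
  have hD0 : D ≠ 0 := by
    rintro rfl
    -- Here `u` and `v` are proportional, so `B` fixes the line of `u` too.
    apply hBu
    have hv' : v 0 ≠ 0 ∨ v 1 ≠ 0 := by
      by_contra! h
      exact hv (by ext i; fin_cases i <;> simp [h])
    ext i
    rcases hv' with h | h <;> apply mul_left_cancel₀ h <;> fin_cases i <;>
      simp [Matrix.mulVec, dotProduct, Fin.sum_univ_two, -mul_eq_mul_left_iff]
    · linear_combination u 0 * hB0 + MB 0 1 * hD
    · linear_combination u 0 * hB1 + (MB 1 1 - ε) * hD
    · linear_combination u 1 * hB0 + (ε - MB 0 0) * hD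
    · linear_combination u 1 * hB1 - MB 1 0 * hD
  obtain ⟨s, hs⟩ : ∃ s, s = ((MA 0 0 * v 0 + MA 0 1 * v 1) * v 1 -
      (MA 1 0 * v 0 + MA 1 1 * v 1) * v 0) / D := ⟨_, rfl⟩
  have hsD : s * D = (MA 0 0 * v 0 + MA 0 1 * v 1) * v 1 -
      (MA 1 0 * v 0 + MA 1 1 * v 1) * v 0 := by rw [hs]; field_simp
  obtain ⟨r, hr⟩ : ∃ r, r = (u 0 * (MB 1 0 * u 0 + MB 1 1 * u 1) -
      u 1 * (MB 0 0 * u 0 + MB 0 1 * u 1)) / D := ⟨_, rfl⟩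
  have hrD : r * D = u 0 * (MB 1 0 * u 0 + MB 1 1 * u 1) -
      u 1 * (MB 0 0 * u 0 + MB 0 1 * u 1) := by rw [hr]; field_simp
  -- Cramer's rule: `A v = s u + ε v` and `B u = ε u + r v`.
  have hdA : u 0 * (MA 1 0 * v 0 + MA 1 1 * v 1) - u 1 * (MA 0 0 * v 0 + MA 0 1 * v 1) =
      ε * D := by
    linear_combination (u 0 * v 1 - u 1 * v 0) * hA - v 1 * hA0 + v 0 * hA1 - ε * hD
  have hdB : (MB 0 0 * u 0 + MB 0 1 * u 1) * v 1 - (MB 1 0 * u 0 + MB 1 1 * u 1) * v 0 =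
      ε * D := by
    linear_combination (u 0 * v 1 - u 1 * v 0) * hB - u 0 * hB1 + u 1 * hB0 - ε * hD
  have hAv0 : MA 0 0 * v 0 + MA 0 1 * v 1 = s * u 0 + ε * v 0 := by
    apply mul_left_cancel₀ hD0
    linear_combination (MA 0 0 * v 0 + MA 0 1 * v 1) * hD - u 0 * hsD + v 0 * hdA
  have hAv1 : MA 1 0 * v 0 + MA 1 1 * v 1 = s * u 1 + ε * v 1 := by
    apply mul_left_cancel₀ hD0
    linear_combination (MA 1 0 * v 0 + MA 1 1 * v 1) * hD - u 1 * hsD + v 1 * hdA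
  have hBu0 : MB 0 0 * u 0 + MB 0 1 * u 1 = ε * u 0 + r * v 0 := by
    apply mul_left_cancel₀ hD0
    linear_combination (MB 0 0 * u 0 + MB 0 1 * u 1) * hD + u 0 * hdB - v 0 * hrD
  have hBu1 : MB 1 0 * u 0 + MB 1 1 * u 1 = ε * u 1 + r * v 1 := by
    apply mul_left_cancel₀ hD0
    linear_combination (MB 1 0 * u 0 + MB 1 1 * u 1) * hD + u 1 * hdB - v 1 * hrD
  have hs0 : s ≠ 0 := by
    rintro rfl
    apply hAv
    ext i
    fin_cases i <;> simp [Matrix.mulVec, dotProduct, Fin.sum_univ_two, hAv0, hAv1]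
  -- The scaling `(t u, (t D)⁻¹ v)` with `t² = ε s / D` has determinant `1` and
  -- makes the off-diagonal entry of `A` equal to `ε`.
  obtain ⟨t, ht⟩ := IsAlgClosed.exists_eq_mul_self (ε * s / D)
  have hε0 : ε ≠ 0 := by rintro rfl; simp at hε2
  have ht0 : t ≠ 0 := by
    rintro rfl
    simp [hε0, hs0, hD0] at ht
  have htD : t * t * D = ε * s := by rw [← ht]; field_simp
  obtain ⟨k, hk⟩ : ∃ k, k * (t * D) = 1 := ⟨(t * D)⁻¹, inv_mul_cancel₀ (mul_ne_zero ht0 hD0)⟩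
  have hks : k * s = ε * t := by
    linear_combination ε * t * hk - k * ε * htD - k * s * hε2
  have hkz : k * (ε * (ε * r * t * t * D)) = r * t := by
    linear_combination r * t * hk + k * r * t * t * D * hε2
  refine ⟨⟨!![t * u 0, v 0 * k; t * u 1, v 1 * k], ?_⟩, ε * r * t * t * D, ?_, ?_⟩
  · rw [Matrix.det_fin_two_of]
    linear_combination hk - t * k * hD
  · ext i j
    fin_cases i <;> fin_cases j <;> simp [Matrix.mul_apply, Fin.sum_univ_two]
    · linear_combination t * hA0
    · linear_combination k * hAv0 + u 0 * hks
    · linear_combination t * hA1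
    · linear_combination k * hAv1 + u 1 * hks
  · ext i j
    fin_cases i <;> fin_cases j <;> simp [Matrix.mul_apply, Fin.sum_univ_two]
    · linear_combination t * hBu0 - v 0 * hkz
    · linear_combination k * hB0
    · linear_combination t * hBu1 - v 1 * hkz
    · linear_combination k * hB1

/-- A common eigenvector of the two generators would span an invariant line. -/
lemma no_common_eigenvector {α β : ℤ} {ρ : KnotGroup α β →* SL2C} (hirr : IsIrreducibleRep ρ)
    (v : Fin 2 → ℂ) (hv : v ≠ 0) (a b : ℂ)
    (ha : (ρ (xgen α β) : Matrix (Fin 2) (Fin 2) ℂ) *ᵥ v = a • v) :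
    (ρ (ygen α β) : Matrix (Fin 2) (Fin 2) ℂ) *ᵥ v ≠ b • v := by
  intro hb
  let H : Subgroup (KnotGroup α β) :=
    { carrier := {g | ∃ c : ℂ, (ρ g : Matrix (Fin 2) (Fin 2) ℂ) *ᵥ v = c • v}
      one_mem' := ⟨1, by simp⟩
      mul_mem' := by
        rintro g h ⟨c, hc⟩ ⟨d, hd⟩
        refine ⟨d * c, ?_⟩
        rw [map_mul, Matrix.SpecialLinearGroup.coe_mul, ← Matrix.mulVec_mulVec, hd,
          Matrix.mulVec_smul, hc, smul_smul]
      inv_mem' := by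
        rintro g ⟨c, hc⟩
        have hinv : (ρ g⁻¹ : Matrix (Fin 2) (Fin 2) ℂ) *ᵥ
            ((ρ g : Matrix (Fin 2) (Fin 2) ℂ) *ᵥ v) = v := by
          rw [Matrix.mulVec_mulVec, ← Matrix.SpecialLinearGroup.coe_mul, ← map_mul]
          simp
        rw [hc, Matrix.mulVec_smul] at hinv
        have hc0 : c ≠ 0 := by
          rintro rfl
          exact hv (by simpa using hinv.symm)
        exact ⟨c⁻¹, by rw [eq_inv_smul_iff₀ hc0]; exact hinv⟩ }
  refine hirr ⟨v, hv, fun g => ?_⟩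
  refine PresentedGroup.generated_by _ H (fun j => ?_) g
  cases j
  · exact ⟨b, hb⟩
  · exact ⟨a, ha⟩

lemma knot_relation (α β : ℤ) :
    xgen α β * wordG α β (xgen α β) (ygen α β) = wordG α β (xgen α β) (ygen α β) * ygen α β := by
  have h := PresentedGroup.one_of_mem (rels := twoBridgeRel α β) (Set.mem_singleton _)
  rw [map_mul, map_inv, mul_inv_eq_one, map_mul, map_mul, map_wordG] at h
  exact h

/-- Every slope on a two-bridge knot is regular: if `ρ` is an irreducible
representation of the two-bridge knot group with `tr ρ(μ) = ±2`, then for all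
coprime integers `p, q` the element `ρ(μ^p λ^q)` is not the identity. -/
theorem every_slope_regular (α β : ℤ) (hα1 : 1 < α) (hαodd : Odd α) (hβodd : Odd β)
    (hβl : -α < β) (hβu : β < α) (hcop : IsCoprime α β)
    (ρ : KnotGroup α β →* SL2C) (hirr : IsIrreducibleRep ρ)
    (htr : Matrix.trace ((ρ (meridian α β) : Matrix (Fin 2) (Fin 2) ℂ)) = 2 ∨
      Matrix.trace ((ρ (meridian α β) : Matrix (Fin 2) (Fin 2) ℂ)) = -2)
    (p q : ℤ) (hpq : IsCoprime p q) :
    ρ (meridian α β ^ p * longitude α β ^ q) ≠ 1 := by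
  obtain ⟨ε, hε, htrx⟩ : ∃ ε : ℂ, (ε = 1 ∨ ε = -1) ∧
      Matrix.trace (ρ (xgen α β) : Matrix (Fin 2) (Fin 2) ℂ) = 2 * ε := by
    rcases htr with h | h
    · exact ⟨1, .inl rfl, by rw [mul_one]; exact h⟩
    · exact ⟨-1, .inr rfl, by rw [mul_neg, mul_one]; exact h⟩
  have hrel := congrArg ρ (knot_relation α β)
  rw [map_mul, map_mul, map_wordG] at hrel
  have htry : Matrix.trace (ρ (ygen α β) : Matrix (Fin 2) (Fin 2) ℂ) = 2 * ε := by
    rw [← htrx, ← inv_mul_eq_iff_eq_mul.2 hrel, ← mul_assoc, Matrix.SpecialLinearGroup.coe_mul,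
      Matrix.trace_mul_comm, ← Matrix.SpecialLinearGroup.coe_mul, ← mul_assoc, mul_inv_cancel,
      one_mul]
  obtain ⟨P, z, hPx, hPy⟩ := exists_normal_form hε htrx htry (no_common_eigenvector hirr)
  let φ : SL2C →* SL2C := (MulAut.conj P⁻¹).toMonoidHom
  have hφ : ∀ g, φ g = P⁻¹ * g * P := fun g => by simp [φ]
  have hAB : (φ (ρ (xgen α β)) = upp 1 ∧ φ (ρ (ygen α β)) = low z) ∨
      (φ (ρ (xgen α β)) = -upp 1 ∧ φ (ρ (ygen α β)) = -low z) := by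
    simp only [hφ, mul_assoc, inv_mul_eq_iff_eq_mul]
    rcases hε with rfl | rfl
    · refine .inl ⟨SL2C.ext_coe ?_, SL2C.ext_coe ?_⟩
      · rw [Matrix.SpecialLinearGroup.coe_mul, Matrix.SpecialLinearGroup.coe_mul, hPx, one_smul,
          coe_upp]
      · rw [Matrix.SpecialLinearGroup.coe_mul, Matrix.SpecialLinearGroup.coe_mul, hPy, one_smul,
          coe_low]
    · refine .inr ⟨SL2C.ext_coe ?_, SL2C.ext_coe ?_⟩
      · rw [Matrix.SpecialLinearGroup.coe_mul, Matrix.SpecialLinearGroup.coe_mul, hPx, neg_one_smul,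
          Matrix.SpecialLinearGroup.coe_neg, coe_upp]
      · rw [Matrix.SpecialLinearGroup.coe_mul, Matrix.SpecialLinearGroup.coe_mul, hPy, neg_one_smul,
          Matrix.SpecialLinearGroup.coe_neg, coe_low]
  have hrel' := congrArg φ hrel
  rw [map_mul, map_mul, map_wordG] at hrel'
  have key := slope_ne_one_of_normal_form hα1 hαodd hβodd hcop hAB hrel' hpq
  intro h
  apply key
  have h' := congrArg φ h
  simpa only [meridian, longitude, map_mul, map_zpow, map_wordG, map_wordStarG, map_one] using h'

end
end

section
/- Let ℓ, m ≥ 2 be integers, at least one of which is even, and let Φ be the total Culler–Shalen seminorm function for K = J(ℓ,m) (with α = ℓm−1 and β = m). Then for all integers p, q: 2Φ(p,q) = (ℓm − ℓ − m)|p| + (ℓ−2)|p + 2mq| + (m−2)|p + 2ℓq| + 2|p + 2(ℓ+m−1)q| if ℓ and m are both even; 2Φ(p,q) = (ℓ−1)(m−1)|p − 2mq| + (ℓ−3)|p| + (m−2)|p + 2(ℓ−m)q| + 2|p + 2(ℓ−1)q| if ℓ is odd; 2Φ(p,q) = (ℓ−1)(m−1)|p − 2ℓq| + (ℓ−2)|p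 + 2(m−ℓ)q| + (m−3)|p| + 2|p + 2(m−1)q| if m is odd. -/
/-!
An expansion with all entries of absolute value at least `2` has value in `(-1, 1)`
(`abs_cf_lt_one`), so its first entry is one of the two integers closest to the inverse of its
value, and the value of the tail is then determined. Peeling off entries in this way from
`m/(ℓm-1)` and `m/(ℓm-1) - 1` shows that there are only four candidates (`mem_Sset_imp`):

* `[ℓ, -m]`, of weight `(ℓ-1)(m-1)` and with `s = 2`;
* `[ℓ-1, 2, -2, 2, …]` (with `m-1` entries `±2`), of weight `ℓ-2` and with `s = 2-m`;
* `[-2, 2, -2, …, ±2, ±(m-1)]` (with `ℓ-1` entries `±2`, the last two entries having the same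
  sign), of weight `m-2` and with `s = 2-ℓ`;
* `[-2, 2, …, ±3, ∓2, ±2, …]` (alternating, of length `ℓ+m-3`, the entry `±3` in position `ℓ-1`),
  of weight `2` and with `s = 3-ℓ-m`.

The second one has an entry `1`, and is thus not in `S`, exactly when `ℓ = 2`, and the third one
exactly when `m = 2`; its weight is then `0`, so the sum over `S` is always the sum over the four
lists. The parities of `ℓ` and `m` tell which of the lists is `n₀`.

Throughout, `ℓ = a + 2` and `m = b + 2` with `a b : ℕ`.
-/


noncomputable section

/-- The continued fraction value `cf [n_1, …, n_k] = 1/(n_1 + 1/(n_2 + ⋯ + 1/n_k))`. -/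
def cf : List ℤ → ℚ
  | [] => 0
  | n :: L => 1 / ((n : ℚ) + cf L)

/-- `n⁺`: the number of (0-based) indices `j` with `sign(n_j) = (−1)^j`
(1-based: `sign(n_i) = (−1)^{i−1}`). -/
def nplus (L : List ℤ) : ℕ :=
  ((Finset.range L.length).filter (fun j => (L.getD j 0).sign = (-1) ^ j)).card

/-- `s(n) = n⁺ − n⁻` where `n⁻ = k − n⁺`. -/
def sval (L : List ℤ) : ℤ := 2 * (nplus L : ℤ) - L.length

/-- The set `S` of all finite integer sequences with all entries of absolute value at
least `2` whose continued fraction value is `β/α` or `(β−α)/α`. -/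
def Sset (α β : ℤ) : Set (List ℤ) :=
  {L | (∀ n ∈ L, 2 ≤ |n|) ∧
    (cf L = (β : ℚ) / (α : ℚ) ∨ cf L = ((β : ℚ) - (α : ℚ)) / (α : ℚ))}

/-- The weight `∏_{j=1}^{k} (|n_j| − 1)` of an expansion. -/
def weightProd (L : List ℤ) : ℤ := (L.map (fun n => |n| - 1)).prod

/-- The total Culler–Shalen seminorm
`Φ(p,q) = (1/2)(−|p| + Σ_{n∈S} |p − N_n·q|·∏_j (|n_j| − 1))`, where
`N_n = 2(s(n) − s(n₀))` and `n₀` is the all-even expansion in `S`. -/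
def totalSeminorm (α β : ℤ) (n₀ : List ℤ) (p q : ℤ) : ℚ :=
  (1 / 2) * (-(|(p : ℚ)|) +
    ∑ᶠ L ∈ Sset α β, ((|p - 2 * (sval L - sval n₀) * q| * weightProd L : ℤ) : ℚ))

/-- The alternating list `[2e, -2e, 2e, …]` of length `k`. -/
def alt : ℕ → ℤ → List ℤ
  | 0, _ => []
  | k + 1, e => 2 * e :: alt k (-e)

/-- The list `[2e, -2e, …, ±2, ±(b+1)]` with `a + 1` alternating entries `±2`, followed by an
entry `±(b+1)` of the same sign as the last of them. -/
def listD (b : ℕ) : ℕ → ℤ → List ℤ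
  | 0, e => [2 * e, e * (b + 1)]
  | a + 1, e => 2 * e :: listD b a (-e)

/-- The alternating list `[2e, -2e, …, ±3, ∓2, …]` of length `a + 1 + b`, with all entries `±2`
except for one entry `±3` in position `a`, counted from `0`. -/
def listE (b : ℕ) : ℕ → ℤ → List ℤ
  | 0, e => 3 * e :: alt b (-e)
  | a + 1, e => 2 * e :: listE b a (-e)

/-! ### Values of continued fractions -/

/-- `Expands L r`: the list `L` has entries of absolute value at least `2` and value `r`. -/
def Expands (L : List ℤ) (r : ℚ) : Prop := (∀ n ∈ L, 2 ≤ |n|) ∧ cf L = r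

lemma abs_cf_lt_one (L : List ℤ) (h : ∀ n ∈ L, 2 ≤ |n|) : |cf L| < 1 := by
  induction L with
  | nil => simp [cf]
  | cons n T ih =>
    have hT := ih fun x hx => h x (List.mem_cons_of_mem _ hx)
    have hn : (2 : ℚ) ≤ |(n : ℚ)| := by exact_mod_cast h n List.mem_cons_self
    have h1 : 1 < |(n : ℚ) + cf T| := by
      have := abs_sub_abs_le_abs_sub (n : ℚ) (-cf T)
      rw [abs_neg, sub_neg_eq_add] at this
      linarith
    rw [cf, abs_div, abs_one, div_lt_one (by linarith)]
    exact h1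

lemma Expands.abs_lt {L : List ℤ} {r : ℚ} (h : Expands L r) : |r| < 1 :=
  h.2 ▸ abs_cf_lt_one L h.1

/-- A tail has value of absolute value less than `1`, so it never cancels an entry that is at
least `2` in absolute value: every denominator is nonzero. -/
lemma Expands.add_ne_zero {L : List ℤ} {r : ℚ} (h : Expands L r) {n : ℤ} (hn : 2 ≤ |n|) :
    (n : ℚ) + r ≠ 0 := by
  intro h0
  have h1 := h.abs_lt
  have hn' : (2 : ℚ) ≤ |(n : ℚ)| := by exact_mod_cast hn
  rw [show r = -(n : ℚ) by linarith, abs_neg] at h1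
  linarith

lemma Expands.cons {L : List ℤ} {r s : ℚ} (h : Expands L r) {n : ℤ} (hn : 2 ≤ |n|)
    (hs : s * (n + r) = 1) : Expands (n :: L) s := by
  refine ⟨by simpa [hn] using h.1, ?_⟩
  rw [cf, h.2, div_eq_iff (h.add_ne_zero hn), hs]

lemma Expands.eq_nil {L : List ℤ} (h : Expands L 0) : L = [] := by
  cases L with
  | nil => rfl
  | cons n T =>
    have hT : Expands T (cf T) := ⟨fun x hx => h.1 x (List.mem_cons_of_mem _ hx), rfl⟩
    have := one_div_ne_zero (hT.add_ne_zero (h.1 n List.mem_cons_self))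
    exact absurd h.2 this

/-- Peeling off the first entry, with `1/r` given as `v`. -/
lemma Expands.peel {L : List ℤ} {r v : ℚ} (h : Expands L r) (hv : r * v = 1) :
    ∃ n T, L = n :: T ∧ 2 ≤ |n| ∧ v - 1 < n ∧ n < v + 1 ∧ Expands T (v - n) := by
  cases L with
  | nil =>
    have : r = 0 := h.2.symm
    simp [this] at hv
  | cons n T =>
    have hT : Expands T (cf T) := ⟨fun x hx => h.1 x (List.mem_cons_of_mem _ hx), rfl⟩
    have hn := h.1 n List.mem_cons_self
    have h0 := hT.add_ne_zero hn
    have h2 : 1 / ((n : ℚ) + cf T) = r := h.2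
    have hx : cf T = v - n := by
      rw [← h2] at hv
      field_simp at hv
      linarith
    have h1 := _root_.abs_lt.1 hT.abs_lt
    exact ⟨n, T, rfl, hn, by linarith, by linarith, hx ▸ hT⟩

/-! ### The lists with a given value -/

lemma expands_alt (k : ℕ) (e : ℤ) (he : e = 1 ∨ e = -1) :
    Expands (alt k e) (e * (k / (k + 1))) := by
  induction k generalizing e with
  | zero => simp [Expands, alt, cf]
  | succ k ih =>
    refine (ih (-e) (by omega)).cons (by rcases he with rfl | rfl <;> simp) ?_
    have : (k : ℚ) + 1 ≠ 0 := by positivity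
    have : (k : ℚ) + 1 + 1 ≠ 0 := by positivity
    rcases he with rfl | rfl <;> push_cast <;> field_simp <;> ring

lemma Expands.eq_alt (k : ℕ) (e : ℤ) (he : e = 1 ∨ e = -1) (L : List ℤ)
    (h : Expands L (e * (k / (k + 1)))) : L = alt k e := by
  induction k generalizing e L with
  | zero => simp at h; exact h.eq_nil
  | succ k ih =>
    have h1 : (k : ℚ) + 1 ≠ 0 := by positivity
    have h2 : (k : ℚ) + 1 + 1 ≠ 0 := by positivity
    have h3 : 0 < 1 / ((k : ℚ) + 1) := by positivity
    have h4 : 1 / ((k : ℚ) + 1) ≤ 1 := by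
      rw [div_le_one (by positivity)]; linarith [(Nat.cast_nonneg k : (0 : ℚ) ≤ k)]
    obtain ⟨n, T, rfl, hn, hl, hu, hT⟩ := h.peel (v := e * (1 + 1 / ((k : ℚ) + 1)))
      (by rcases he with rfl | rfl <;> push_cast <;> field_simp)
    have hn2 : n = 2 * e := by
      rcases he with rfl | rfl
      · have : (0 : ℤ) < n := by push_cast at hl; exact_mod_cast (by linarith : (0 : ℚ) < n)
        have : n < (3 : ℤ) := by push_cast at hu; exact_mod_cast (by linarith : (n : ℚ) < 3)
        rw [abs_of_pos (by omega)] at hn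
        omega
      · have : (-3 : ℤ) < n := by push_cast at hl; exact_mod_cast (by linarith : (-3 : ℚ) < n)
        have : n < (0 : ℤ) := by push_cast at hu; exact_mod_cast (by linarith : (n : ℚ) < 0)
        rw [abs_of_neg (by omega)] at hn
        omega
    subst hn2
    rw [alt, ih (-e) (by omega) T]
    convert hT using 1
    push_cast
    field_simp
    ring

lemma Expands.eq_singleton (k : ℕ) (e : ℤ) (he : e = 1 ∨ e = -1) (L : List ℤ)
    (h : Expands L (e * (1 / (k + 1)))) : L = [e * (k + 1)] := by
  have h1 : (k : ℚ) + 1 ≠ 0 := by positivity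
  obtain ⟨n, T, rfl, hn, hl, hu, hT⟩ := h.peel (v := e * (k + 1))
    (by rcases he with rfl | rfl <;> push_cast <;> field_simp)
  have hn2 : n = e * (k + 1) := by
    have hl' : e * (k + 1) - 1 < n := by exact_mod_cast hl
    have hu' : n < e * (k + 1) + 1 := by exact_mod_cast hu
    omega
  subst hn2
  rw [show (e * ((k : ℚ) + 1) - ((e * (k + 1) : ℤ) : ℚ)) = 0 by push_cast; ring] at hT
  rw [hT.eq_nil]

lemma expands_singleton (k : ℕ) (hk : 1 ≤ k) (e : ℤ) (he : e = 1 ∨ e = -1) :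
    Expands [e * (k + 1)] (e * (1 / (k + 1))) := by
  have h1 : (k : ℚ) + 1 ≠ 0 := by positivity
  have h0 : Expands [] 0 := ⟨by simp, rfl⟩
  refine h0.cons ?_ (by rcases he with rfl | rfl <;> push_cast <;> field_simp <;> ring)
  have : |(k : ℤ) + 1| = k + 1 := abs_of_nonneg (by positivity)
  rw [abs_mul, this]
  rcases he with rfl | rfl <;> simp <;> omega

/-- The value shared by `listD b a e` and `listE b a e`: up to sign, it is
`((ℓ-1)m - 1)/(ℓm - 1)` for `ℓ = a + 2` and `m = b + 2`. -/
def valDE (b a : ℕ) : ℚ := ((a + 1) * (b + 2) - 1) / ((a + 2) * (b + 2) - 1)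

lemma valDE_zero_mul (b : ℕ) : valDE b 0 * (2 + 1 / (b + 1)) = 1 := by
  have h1 : (b : ℚ) + 1 ≠ 0 := by positivity
  have h2 : (2 : ℚ) * (b + 2) - 1 ≠ 0 := by
    have : (0 : ℚ) ≤ b := by positivity
    linarith
  simp only [valDE]
  push_cast
  field_simp
  rw [div_eq_iff (by ring_nf at h2 ⊢; exact h2)]
  ring

lemma valDE_succ_mul (b a : ℕ) : valDE b (a + 1) * (2 - valDE b a) = 1 := by
  have ha : (0 : ℚ) ≤ a := by positivity
  have hb : (0 : ℚ) ≤ b := by positivity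
  have h1 : ((a : ℚ) + 2) * (b + 2) - 1 ≠ 0 := by nlinarith [mul_nonneg ha hb]
  have h2 : ((a : ℚ) + 3) * (b + 2) - 1 ≠ 0 := by nlinarith [mul_nonneg ha hb]
  have e1 : valDE b (a + 1) = ((a + 2) * (b + 2) - 1) / ((a + 3) * (b + 2) - 1) := by
    simp only [valDE]; push_cast; congr 1 <;> ring
  have e2 : 2 - valDE b a = ((a + 3) * (b + 2) - 1) / ((a + 2) * (b + 2) - 1) := by
    simp only [valDE]; rw [eq_div_iff h1, sub_mul, div_mul_cancel₀ _ h1]; ring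
  rw [e1, e2, div_mul_div_cancel₀ h2, div_self h1]

lemma valDE_mem (b a : ℕ) : 0 < valDE b a ∧ valDE b a < 1 := by
  have ha : (0 : ℚ) ≤ a := by positivity
  have hb : (0 : ℚ) ≤ b := by positivity
  have hp : 0 < ((a : ℚ) + 2) * (b + 2) - 1 := by nlinarith [mul_nonneg ha hb]
  constructor
  · exact div_pos (by nlinarith [mul_nonneg ha hb]) hp
  · rw [valDE, div_lt_one hp]; nlinarith [mul_nonneg ha hb]

lemma expands_listE (b a : ℕ) (e : ℤ) (he : e = 1 ∨ e = -1) :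
    Expands (listE b a e) (e * valDE b a) := by
  induction a generalizing e with
  | zero =>
    refine (expands_alt b (-e) (by omega)).cons (by rcases he with rfl | rfl <;> simp) ?_
    have h1 : (b : ℚ) + 1 ≠ 0 := by positivity
    have e3 : (b : ℚ) / (b + 1) = 1 - 1 / (b + 1) := by field_simp; ring
    have := valDE_zero_mul b
    rw [e3]
    rcases he with rfl | rfl <;> push_cast <;> linear_combination this
  | succ a ih =>
    refine (ih (-e) (by omega)).cons (by rcases he with rfl | rfl <;> simp) ?_
    have := valDE_succ_mul b a
    rcases he with rfl | rfl <;> push_cast <;> linear_combination this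

lemma expands_listD (b : ℕ) (hb : 1 ≤ b) (a : ℕ) (e : ℤ) (he : e = 1 ∨ e = -1) :
    Expands (listD b a e) (e * valDE b a) := by
  induction a generalizing e with
  | zero =>
    refine (expands_singleton b hb e he).cons (by rcases he with rfl | rfl <;> simp) ?_
    have := valDE_zero_mul b
    rcases he with rfl | rfl <;> push_cast <;> linear_combination this
  | succ a ih =>
    refine (ih (-e) (by omega)).cons (by rcases he with rfl | rfl <;> simp) ?_
    have := valDE_succ_mul b a
    rcases he with rfl | rfl <;> push_cast <;> linear_combination this

lemma Expands.eq_listD_or_listE (b a : ℕ) (e : ℤ) (he : e = 1 ∨ e = -1) (L : List ℤ)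
    (h : Expands L (e * valDE b a)) : L = listD b a e ∨ L = listE b a e := by
  induction a generalizing e L with
  | zero =>
    have h1 : (b : ℚ) + 1 ≠ 0 := by positivity
    have h3 : 0 < 1 / ((b : ℚ) + 1) := by positivity
    have h4 : 1 / ((b : ℚ) + 1) ≤ 1 := by
      rw [div_le_one (by positivity)]; linarith [(Nat.cast_nonneg b : (0 : ℚ) ≤ b)]
    have hv := valDE_zero_mul b
    obtain ⟨n, T, rfl, hn, hl, hu, hT⟩ := h.peel (v := e * (2 + 1 / ((b : ℚ) + 1)))
      (by rcases he with rfl | rfl <;> push_cast <;> linear_combination hv)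
    have hn2 : n = 2 * e ∨ n = 3 * e := by
      rcases he with rfl | rfl
      · have : (1 : ℤ) < n := by push_cast at hl; exact_mod_cast (by linarith : (1 : ℚ) < n)
        have : n < (4 : ℤ) := by push_cast at hu; exact_mod_cast (by linarith : (n : ℚ) < 4)
        omega
      · have : (-4 : ℤ) < n := by push_cast at hl; exact_mod_cast (by linarith : (-4 : ℚ) < n)
        have : n < (-1 : ℤ) := by push_cast at hu; exact_mod_cast (by linarith : (n : ℚ) < -1)
        omega
    rcases hn2 with rfl | rfl
    · left
      rw [listD, Expands.eq_singleton b e he T]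
      convert hT using 1
      push_cast
      ring
    · right
      rw [listE, Expands.eq_alt b (-e) (by omega) T]
      convert hT using 1
      push_cast
      field_simp
      ring
  | succ a ih =>
    obtain ⟨h0, h1⟩ := valDE_mem b a
    have hv := valDE_succ_mul b a
    obtain ⟨n, T, rfl, hn, hl, hu, hT⟩ := h.peel (v := e * (2 - valDE b a))
      (by rcases he with rfl | rfl <;> push_cast <;> linear_combination hv)
    have hn2 : n = 2 * e := by
      rcases he with rfl | rfl
      · have : (0 : ℤ) < n := by push_cast at hl; exact_mod_cast (by linarith : (0 : ℚ) < n)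
        have : n < (3 : ℤ) := by push_cast at hu; exact_mod_cast (by linarith : (n : ℚ) < 3)
        rw [abs_of_pos (by omega)] at hn
        omega
      · have : (-3 : ℤ) < n := by push_cast at hl; exact_mod_cast (by linarith : (-3 : ℚ) < n)
        have : n < (0 : ℤ) := by push_cast at hu; exact_mod_cast (by linarith : (n : ℚ) < 0)
        rw [abs_of_neg (by omega)] at hn
        omega
    subst hn2
    have := ih (-e) (by omega) T (by convert hT using 1; push_cast; ring)
    rcases this with rfl | rfl
    · left; rfl
    · right; rfl

/-! ### The set of expansions of `J(ℓ, m)` -/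

/-- The expansion `[ℓ, -m]`. -/
def lA (a b : ℕ) : List ℤ := [(a : ℤ) + 2, -((b : ℤ) + 2)]

/-- The list `[ℓ-1, 2, -2, …]`, an expansion for `ℓ ≥ 3`. -/
def lB (a b : ℕ) : List ℤ := ((a : ℤ) + 1) :: alt (b + 1) 1

/-- The list `[-2, 2, …, ±2, ±(m-1)]`, an expansion for `m ≥ 3`. -/
def lD (a b : ℕ) : List ℤ := listD b a (-1)

/-- The expansion `[-2, 2, …, ±3, ∓2, …]`. -/
def lE (a b : ℕ) : List ℤ := listE b a (-1)

lemma mem_Sset_iff (a b : ℕ) (L : List ℤ) :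
    L ∈ Sset (((a + 2 : ℕ) : ℤ) * (b + 2 : ℕ) - 1) ((b + 2 : ℕ) : ℤ) ↔
      Expands L ((b + 2) / ((a + 2) * (b + 2) - 1)) ∨ Expands L ((-1 : ℤ) * valDE b a) := by
  have ha : (0 : ℚ) ≤ a := by positivity
  have hb : (0 : ℚ) ≤ b := by positivity
  have hp : ((a : ℚ) + 2) * (b + 2) - 1 ≠ 0 := by nlinarith [mul_nonneg ha hb]
  have e : ((b : ℚ) + 2 - ((a + 2) * (b + 2) - 1)) / ((a + 2) * (b + 2) - 1)
      = (-1 : ℤ) * valDE b a := by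
    rw [valDE, div_eq_iff hp, mul_assoc, div_mul_cancel₀ _ hp]; push_cast; ring
  simp only [Sset, Set.mem_ofPred_eq, Expands]
  rw [← e]
  push_cast
  tauto

/-- The inverse of the value `m/(ℓm-1)` is `ℓ - 1/m`. -/
lemma val_mul (a b : ℕ) :
    ((b : ℚ) + 2) / ((a + 2) * (b + 2) - 1) * (a + 2 - 1 / (b + 2)) = 1 := by
  have ha : (0 : ℚ) ≤ a := by positivity
  have hb : (0 : ℚ) ≤ b := by positivity
  have hp : ((a : ℚ) + 2) * (b + 2) - 1 ≠ 0 := by nlinarith [mul_nonneg ha hb]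
  have h2 : (b : ℚ) + 2 ≠ 0 := by positivity
  rw [div_mul_eq_mul_div, div_eq_iff hp, mul_sub, mul_one_div_cancel h2]
  ring

lemma mem_Sset_imp (a b : ℕ) (L : List ℤ)
    (h : L ∈ Sset (((a + 2 : ℕ) : ℤ) * (b + 2 : ℕ) - 1) ((b + 2 : ℕ) : ℤ)) :
    L = lA a b ∨ L = lB a b ∨ L = lD a b ∨ L = lE a b := by
  rw [mem_Sset_iff] at h
  rcases h with h | h
  · have h3 : 0 < 1 / ((b : ℚ) + 2) := by positivity
    have h4 : 1 / ((b : ℚ) + 2) < 1 := by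
      rw [div_lt_one (by positivity)]; linarith [(Nat.cast_nonneg b : (0 : ℚ) ≤ b)]
    have h5 : (b : ℚ) + 2 ≠ 0 := by positivity
    obtain ⟨n, T, rfl, hn, hl, hu, hT⟩ := h.peel (val_mul a b)
    have hn1 : (a : ℤ) < n := by exact_mod_cast (by linarith : (a : ℚ) < n)
    have hn2 : n < (a : ℤ) + 3 := by exact_mod_cast (by linarith : (n : ℚ) < a + 3)
    obtain rfl | rfl : n = (a : ℤ) + 2 ∨ n = (a : ℤ) + 1 := by omega
    · left
      rw [lA, Expands.eq_singleton (b + 1) (-1) (by omega) T]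
      · push_cast; ring_nf
      · convert hT using 1
        push_cast
        ring
    · right; left
      rw [lB, Expands.eq_alt (b + 1) 1 (by omega) T]
      convert hT using 1
      push_cast
      have : (b : ℚ) + 1 + 1 ≠ 0 := by positivity
      field_simp
      ring
  · rcases h.eq_listD_or_listE b a (-1) (by omega) L with h | h
    · exact Or.inr (Or.inr (Or.inl h))
    · exact Or.inr (Or.inr (Or.inr h))

lemma lA_mem (a b : ℕ) :
    lA a b ∈ Sset (((a + 2 : ℕ) : ℤ) * (b + 2 : ℕ) - 1) ((b + 2 : ℕ) : ℤ) := by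
  rw [mem_Sset_iff]
  left
  have h := expands_singleton (b + 1) (by omega) (-1) (by omega)
  rw [show (-1 : ℤ) * (((b + 1 : ℕ) : ℤ) + 1) = -((b : ℤ) + 2) by push_cast; ring] at h
  refine h.cons ?_ ?_
  · rw [abs_of_nonneg (by positivity)]; omega
  · refine Eq.trans ?_ (val_mul a b); push_cast; ring

lemma lB_mem (a b : ℕ) (ha : 1 ≤ a) :
    lB a b ∈ Sset (((a + 2 : ℕ) : ℤ) * (b + 2 : ℕ) - 1) ((b + 2 : ℕ) : ℤ) := by
  rw [mem_Sset_iff]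
  left
  refine (expands_alt (b + 1) 1 (by omega)).cons ?_ ?_
  · rw [abs_of_nonneg (by positivity)]; omega
  · refine Eq.trans ?_ (val_mul a b)
    have h1 : (b : ℚ) + 2 ≠ 0 := by positivity
    have h2 : (b : ℚ) + 1 + 1 ≠ 0 := by positivity
    congr 1
    push_cast
    field_simp
    ring

lemma lD_mem (a b : ℕ) (hb : 1 ≤ b) :
    lD a b ∈ Sset (((a + 2 : ℕ) : ℤ) * (b + 2 : ℕ) - 1) ((b + 2 : ℕ) : ℤ) :=
  (mem_Sset_iff a b _).2 (Or.inr (expands_listD b hb a (-1) (by omega)))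

lemma lE_mem (a b : ℕ) :
    lE a b ∈ Sset (((a + 2 : ℕ) : ℤ) * (b + 2 : ℕ) - 1) ((b + 2 : ℕ) : ℤ) :=
  (mem_Sset_iff a b _).2 (Or.inr (expands_listE b a (-1) (by omega)))

/-! ### Signs and weights -/

/-- Removing the first entry shifts all positions by one, which exchanges `n⁺` and `n⁻` for the
remaining entries. An entry `0` counts in `n⁻` at every position, hence the hypothesis. -/
lemma sval_cons (n : ℤ) (L : List ℤ) (hL : ∀ x ∈ L, x ≠ 0) :
    sval (n :: L) = (if 0 < n then 1 else -1) - sval L := by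
  have key : nplus (n :: L) + nplus L = (if 0 < n then 1 else 0) + L.length := by
    unfold nplus
    rw [Finset.card_filter, Finset.card_filter, List.length_cons, Finset.sum_range_succ',
      add_comm (∑ i ∈ _, _), add_assoc, ← Finset.sum_add_distrib]
    congr 1
    · simp [Int.sign_eq_one_iff_pos]
    · have : ∀ i ∈ Finset.range L.length,
          ((if (((n :: L).getD (i + 1) 0).sign = (-1) ^ (i + 1)) then 1 else 0) +
            (if ((L.getD i 0).sign = (-1) ^ i) then 1 else 0) : ℕ) = 1 := by
        intro i hi
        rw [Finset.mem_range] at hi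
        rw [List.getD_cons_succ, pow_succ, List.getD_eq_getElem _ _ hi]
        have h0 := hL _ (List.getElem_mem hi)
        rcases lt_or_gt_of_ne h0 with h | h
        · rw [Int.sign_eq_neg_one_of_neg h]
          rcases neg_one_pow_eq_or ℤ i with h' | h' <;> rw [h'] <;> norm_num
        · rw [Int.sign_eq_one_of_pos h]
          rcases neg_one_pow_eq_or ℤ i with h' | h' <;> rw [h'] <;> norm_num
      rw [Finset.sum_congr rfl this]
      simp
  unfold sval
  rw [List.length_cons]
  split_ifs at key ⊢ <;> push_cast <;> omega

lemma sval_nil : sval [] = 0 := by simp [sval, nplus]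

lemma weightProd_cons (n : ℤ) (L : List ℤ) : weightProd (n :: L) = (|n| - 1) * weightProd L := by
  simp [weightProd]

lemma alt_ne (k : ℕ) (e : ℤ) (he : e = 1 ∨ e = -1) : ∀ x ∈ alt k e, x ≠ 0 := by
  induction k generalizing e with
  | zero => simp [alt]
  | succ k ih =>
    simp only [alt, List.mem_cons, forall_eq_or_imp]
    exact ⟨by omega, ih (-e) (by omega)⟩

lemma listD_ne (b a : ℕ) (e : ℤ) (he : e = 1 ∨ e = -1) : ∀ x ∈ listD b a e, x ≠ 0 := by
  induction a generalizing e with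
  | zero =>
    simp only [listD, List.mem_cons, forall_eq_or_imp]
    refine ⟨by omega, ?_, by simp⟩
    rcases he with rfl | rfl <;> omega
  | succ a ih =>
    simp only [listD, List.mem_cons, forall_eq_or_imp]
    exact ⟨by omega, ih (-e) (by omega)⟩

lemma listE_ne (b a : ℕ) (e : ℤ) (he : e = 1 ∨ e = -1) : ∀ x ∈ listE b a e, x ≠ 0 := by
  induction a generalizing e with
  | zero =>
    simp only [listE, List.mem_cons, forall_eq_or_imp]
    exact ⟨by omega, alt_ne b (-e) (by omega)⟩
  | succ a ih =>
    simp only [listE, List.mem_cons, forall_eq_or_imp]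
    exact ⟨by omega, ih (-e) (by omega)⟩

lemma sval_alt (k : ℕ) (e : ℤ) (he : e = 1 ∨ e = -1) : sval (alt k e) = e * k := by
  induction k generalizing e with
  | zero => simp [alt, sval_nil]
  | succ k ih =>
    rw [alt, sval_cons _ _ (alt_ne k (-e) (by omega)), ih (-e) (by omega)]
    rcases he with rfl | rfl <;> norm_num <;> ring

lemma sval_listD (b a : ℕ) (e : ℤ) (he : e = 1 ∨ e = -1) : sval (listD b a e) = e * a := by
  induction a generalizing e with
  | zero =>
    have h0 : (0 : ℤ) < b + 1 := by positivity
    have h1 : ¬ (0 : ℤ) < -1 * (b + 1) := by omega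
    have hne : ∀ x ∈ [e * ((b : ℤ) + 1)], x ≠ 0 := by
      rcases he with rfl | rfl <;> simp <;> omega
    rw [listD, sval_cons _ _ hne, sval_cons _ _ (by simp), sval_nil]
    rcases he with rfl | rfl
    · simp [h0]
    · rw [if_neg h1]; norm_num
  | succ a ih =>
    rw [listD, sval_cons _ _ (listD_ne b a (-e) (by omega)), ih (-e) (by omega)]
    rcases he with rfl | rfl <;> norm_num <;> ring

lemma sval_listE (b a : ℕ) (e : ℤ) (he : e = 1 ∨ e = -1) :
    sval (listE b a e) = e * (a + b + 1) := by
  induction a generalizing e with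
  | zero =>
    rw [listE, sval_cons _ _ (alt_ne b (-e) (by omega)), sval_alt b (-e) (by omega)]
    rcases he with rfl | rfl <;> norm_num <;> ring
  | succ a ih =>
    rw [listE, sval_cons _ _ (listE_ne b a (-e) (by omega)), ih (-e) (by omega)]
    rcases he with rfl | rfl <;> norm_num <;> ring

lemma weight_alt (k : ℕ) (e : ℤ) (he : e = 1 ∨ e = -1) : weightProd (alt k e) = 1 := by
  induction k generalizing e with
  | zero => simp [alt, weightProd]
  | succ k ih =>
    rw [alt, weightProd_cons, ih (-e) (by omega)]
    rcases he with rfl | rfl <;> norm_num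

lemma weight_listD (b a : ℕ) (e : ℤ) (he : e = 1 ∨ e = -1) : weightProd (listD b a e) = b := by
  induction a generalizing e with
  | zero =>
    have h : |(b : ℤ) + 1| = b + 1 := abs_of_nonneg (by positivity)
    rw [listD, weightProd_cons, weightProd_cons, abs_mul e, h]
    rcases he with rfl | rfl <;> norm_num [weightProd]
  | succ a ih =>
    rw [listD, weightProd_cons, ih (-e) (by omega)]
    rcases he with rfl | rfl <;> norm_num

lemma weight_listE (b a : ℕ) (e : ℤ) (he : e = 1 ∨ e = -1) : weightProd (listE b a e) = 2 := by
  induction a generalizing e with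
  | zero =>
    rw [listE, weightProd_cons, weight_alt b (-e) (by omega)]
    rcases he with rfl | rfl <;> norm_num
  | succ a ih =>
    rw [listE, weightProd_cons, ih (-e) (by omega)]
    rcases he with rfl | rfl <;> norm_num

lemma sval_lA (a b : ℕ) : sval (lA a b) = 2 := by
  have h1 : (0 : ℤ) < a + 2 := by positivity
  have h2 : ¬ (0 : ℤ) < -((b : ℤ) + 2) := by omega
  have hne : ∀ x ∈ [-((b : ℤ) + 2)], x ≠ 0 := by simp; omega
  rw [lA, sval_cons _ _ hne, sval_cons _ _ (by simp), sval_nil, if_pos h1, if_neg h2]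
  norm_num

lemma sval_lB (a b : ℕ) : sval (lB a b) = -b := by
  have h1 : (0 : ℤ) < a + 1 := by positivity
  rw [lB, sval_cons _ _ (alt_ne _ 1 (by omega)), sval_alt _ 1 (by omega), if_pos h1]
  push_cast
  ring

lemma sval_lD (a b : ℕ) : sval (lD a b) = -a := by
  rw [lD, sval_listD _ _ _ (by omega)]; ring

lemma sval_lE (a b : ℕ) : sval (lE a b) = -(a + b + 1) := by
  rw [lE, sval_listE _ _ _ (by omega)]; ring

lemma weight_lA (a b : ℕ) : weightProd (lA a b) = (a + 1) * (b + 1) := by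
  have h1 : |(a : ℤ) + 2| = a + 2 := abs_of_nonneg (by positivity)
  have h2 : |(b : ℤ) + 2| = b + 2 := abs_of_nonneg (by positivity)
  rw [lA, weightProd_cons, weightProd_cons, abs_neg, h1, h2]
  simp only [weightProd, List.map_nil, List.prod_nil]
  ring

lemma weight_lB (a b : ℕ) : weightProd (lB a b) = a := by
  have h1 : |(a : ℤ) + 1| = a + 1 := abs_of_nonneg (by positivity)
  rw [lB, weightProd_cons, weight_alt _ 1 (by omega), h1]
  ring

lemma weight_lD (a b : ℕ) : weightProd (lD a b) = b := weight_listD _ _ _ (by omega)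

lemma weight_lE (a b : ℕ) : weightProd (lE a b) = 2 := weight_listE _ _ _ (by omega)

/-! ### The seminorm -/

/-- For `ℓ = m` the two lists have the same `s`, but their first entries differ in sign. -/
lemma lB_ne_lD (a b : ℕ) : lB a b ≠ lD a b := by
  intro h
  have h' := congrArg List.head? h
  cases a with
  | zero => simp [lB, lD, listD] at h'
  | succ a => simp [lB, lD, listD] at h'; omega

lemma even_lD (a b : ℕ) (h : ∀ n ∈ lD a b, Even n) : Odd b := by
  have key : ∀ e : ℤ, (e = 1 ∨ e = -1) → (∀ n ∈ listD b a e, Even n) → Odd b := by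
    clear h
    induction a with
    | zero =>
      intro e he h
      have := h (e * (b + 1)) (by simp [listD])
      rw [Nat.odd_iff]
      rw [Int.even_iff] at this
      rcases he with rfl | rfl <;> omega
    | succ a ih =>
      intro e he h
      exact ih (-e) (by omega) fun n hn => h n (List.mem_cons_of_mem _ hn)
  exact key (-1) (by omega) h

lemma not_even_lE (a b : ℕ) : ¬ ∀ n ∈ lE a b, Even n := by
  have key : ∀ e : ℤ, (e = 1 ∨ e = -1) → ¬ ∀ n ∈ listE b a e, Even n := by
    induction a with
    | zero =>
      intro e he h
      have := h (3 * e) (by simp [listE])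
      rw [Int.even_iff] at this
      rcases he with rfl | rfl <;> omega
    | succ a ih =>
      intro e he h
      exact ih (-e) (by omega) fun n hn => h n (List.mem_cons_of_mem _ hn)
  exact key (-1) (by omega)

/-- The seminorm in terms of the four lists, with `s(n₀)` left as it is. -/
lemma two_mul_totalSeminorm (a b : ℕ) (n₀ : List ℤ) (p q : ℤ) :
    2 * totalSeminorm (((a + 2 : ℕ) : ℤ) * (b + 2 : ℕ) - 1) ((b + 2 : ℕ) : ℤ) n₀ p q =
      -|(p : ℚ)| + ((a + 1) * (b + 1) * |(p : ℚ) - 2 * (2 - sval n₀) * q| +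
        a * |(p : ℚ) - 2 * (-b - sval n₀) * q| +
        b * |(p : ℚ) - 2 * (-a - sval n₀) * q| +
        2 * |(p : ℚ) - 2 * (-(a + b + 1) - sval n₀) * q|) := by
  have hAB : lA a b ≠ lB a b := fun h => by
    have := congrArg sval h; rw [sval_lA, sval_lB] at this; omega
  have hAD : lA a b ≠ lD a b := fun h => by
    have := congrArg sval h; rw [sval_lA, sval_lD] at this; omega
  have hAE : lA a b ≠ lE a b := fun h => by
    have := congrArg sval h; rw [sval_lA, sval_lE] at this; omega
  have hBE : lB a b ≠ lE a b := fun h => by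
    have := congrArg sval h; rw [sval_lB, sval_lE] at this; omega
  have hDE : lD a b ≠ lE a b := fun h => by
    have := congrArg sval h; rw [sval_lD, sval_lE] at this; omega
  unfold totalSeminorm
  rw [finsum_mem_eq_sum_of_inter_support_eq (t := {lA a b, lB a b, lD a b, lE a b})]
  · rw [Finset.sum_insert (by simp [hAB, hAD, hAE]),
      Finset.sum_insert (by simp [lB_ne_lD, hBE]),
      Finset.sum_insert (by simp [hDE]), Finset.sum_singleton, sval_lA, sval_lB, sval_lD, sval_lE,
      weight_lA, weight_lB, weight_lD, weight_lE]
    push_cast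
    ring
  · ext L
    simp only [Set.mem_inter_iff, Function.mem_support, Finset.coe_insert, Finset.coe_singleton,
      Set.mem_insert_iff, Set.mem_singleton_iff]
    refine and_congr_left fun hf => ⟨mem_Sset_imp a b L, ?_⟩
    -- A candidate outside `S` has weight `0`, so it is not in the support.
    have hw : weightProd L ≠ 0 := fun h0 => hf (by rw [h0]; simp)
    rintro (rfl | rfl | rfl | rfl)
    · exact lA_mem a b
    · rw [weight_lB] at hw; exact lB_mem a b (by omega)
    · rw [weight_lD] at hw; exact lD_mem a b (by omega)
    · exact lE_mem a b

/-- Theorem (seminorms for `J(ℓ,m)`, `α = ℓm−1`, `β = m`): the stated closed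
formulas for `2Φ(p,q)` in the three parity cases. -/
theorem seminorm_J_ell_m (ℓ m : ℕ) (hℓ : 2 ≤ ℓ) (hm : 2 ≤ m)
    (hpar : Even ℓ ∨ Even m) (n₀ : List ℤ)
    (hn₀S : n₀ ∈ Sset ((ℓ : ℤ) * m - 1) (m : ℤ)) (hn₀even : ∀ n ∈ n₀, Even n)
    (p q : ℤ) :
    ((Even ℓ ∧ Even m) →
      2 * totalSeminorm ((ℓ : ℤ) * m - 1) (m : ℤ) n₀ p q =
        ((ℓ : ℚ) * m - ℓ - m) * |(p : ℚ)| +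
          ((ℓ : ℚ) - 2) * |(p : ℚ) + 2 * (m : ℚ) * (q : ℚ)| +
          ((m : ℚ) - 2) * |(p : ℚ) + 2 * (ℓ : ℚ) * (q : ℚ)| +
          2 * |(p : ℚ) + 2 * ((ℓ : ℚ) + (m : ℚ) - 1) * (q : ℚ)|) ∧
    (Odd ℓ →
      2 * totalSeminorm ((ℓ : ℤ) * m - 1) (m : ℤ) n₀ p q =
        ((ℓ : ℚ) - 1) * ((m : ℚ) - 1) * |(p : ℚ) - 2 * (m : ℚ) * (q : ℚ)| +
          ((ℓ : ℚ) - 3) * |(p : ℚ)| +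
          ((m : ℚ) - 2) * |(p : ℚ) + 2 * ((ℓ : ℚ) - (m : ℚ)) * (q : ℚ)| +
          2 * |(p : ℚ) + 2 * ((ℓ : ℚ) - 1) * (q : ℚ)|) ∧
    (Odd m →
      2 * totalSeminorm ((ℓ : ℤ) * m - 1) (m : ℤ) n₀ p q =
        ((ℓ : ℚ) - 1) * ((m : ℚ) - 1) * |(p : ℚ) - 2 * (ℓ : ℚ) * (q : ℚ)| +
          ((ℓ : ℚ) - 2) * |(p : ℚ) + 2 * ((m : ℚ) - (ℓ : ℚ)) * (q : ℚ)| +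
          ((m : ℚ) - 3) * |(p : ℚ)| +
          2 * |(p : ℚ) + 2 * ((m : ℚ) - 1) * (q : ℚ)|) := by
  obtain ⟨a, rfl⟩ := Nat.exists_eq_add_of_le' hℓ
  obtain ⟨b, rfl⟩ := Nat.exists_eq_add_of_le' hm
  rw [two_mul_totalSeminorm]
  -- For each of the four lists, the parities forced by its entries being even.
  have hcases : (Even a ∧ Even b ∧ sval n₀ = 2) ∨ (Odd a ∧ sval n₀ = -b) ∨
      (Odd b ∧ sval n₀ = -a) := by
    rcases mem_Sset_imp a b n₀ hn₀S with rfl | rfl | rfl | rfl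
    · have h1 := hn₀even ((a : ℤ) + 2) (by simp [lA])
      have h2 := hn₀even (-((b : ℤ) + 2)) (by simp [lA])
      rw [Int.even_iff] at h1 h2
      exact Or.inl ⟨by rw [Nat.even_iff]; omega, by rw [Nat.even_iff]; omega, sval_lA a b⟩
    · have h1 := hn₀even ((a : ℤ) + 1) (by simp [lB])
      rw [Int.even_iff] at h1
      exact Or.inr (Or.inl ⟨by rw [Nat.odd_iff]; omega, sval_lB a b⟩)
    · exact Or.inr (Or.inr ⟨even_lD a b hn₀even, sval_lD a b⟩)
    · exact absurd hn₀even (not_even_lE a b)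
  simp only [Nat.even_iff, Nat.odd_iff] at hcases hpar ⊢
  refine ⟨fun h => ?_, fun h => ?_, fun h => ?_⟩
  · obtain ⟨-, -, hs⟩ | ⟨h1, -⟩ | ⟨h1, -⟩ := hcases
    · rw [hs]; push_cast; ring_nf
    · omega
    · omega
  · obtain ⟨h1, -⟩ | ⟨-, hs⟩ | ⟨h1, -⟩ := hcases
    · omega
    · rw [hs]; push_cast; ring_nf
    · omega
  · obtain ⟨-, h1, -⟩ | ⟨h1, -⟩ | ⟨-, hs⟩ := hcases
    · omega
    · omega
    · rw [hs]; push_cast; ring_nf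
end
end
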